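/- For every integer m ≥ 3 and every sufficiently large positive integer n, the Cayley graph of Z_n with connection set {±⌊n^{(m-i)/m}⌉ : i = 1, …, m} has diameter at most m·n^{1/m} + m. -/

import Mathlib

/-- Nearest integer to `n^((m-i)/m)`. -/
noncomputable def genStep (m n i : ℕ) : ℤ :=
  round ((n : ℝ) ^ (((m - i : ℕ) : ℝ) / (m : ℝ)))

/-- The Cayley graph `Λ_m(n)` of `ZMod n` with connection set
`{±⌊n^((m-i)/m)⌉ : i = 1, …, m}` (note `⌊n^0⌉ = 1`). -/
noncomputable def lamM (m n : ℕ) : SimpleGraph (ZMod n) :=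
  SimpleGraph.fromRel (fun x y =>
    ∃ i : ℕ, 1 ≤ i ∧ i ≤ m ∧ y = x + ((genStep m n i : ℤ) : ZMod n))

/-!
Put `a = n ^ (1 / m)`, so that the generators are the integers `round (a ^ k)` for `k < m`, and
`round (a ^ m) = n`. Every residue has a representative `0 ≤ x < n`, which division with remainder
by `round (a ^ (m - 1))`, …, `round (a ^ 0) = 1` in turn writes as a combination of the generators.
The coefficient of `round (a ^ k)` is at most `round (a ^ (k + 1)) / round (a ^ k) ≤ a + 1`, so the
combination has at most `m * (a + 1)` summands.
-/

section Cayley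

open SimpleGraph

variable {M : Type*} {s : Set M}

lemma edist_addCayley_add_le_one [Add M] {g : M} (hg : g ∈ s) (u : M) :
    (addCayley s).edist u (u + g) ≤ 1 := by
  rw [edist_le_one_iff_adj_or_eq, or_iff_not_imp_right]
  exact fun hne => (addCayley_adj' s u (u + g)).mpr ⟨hne, g, hg, .inl rfl⟩

lemma edist_addCayley_add_nsmul_le [AddMonoid M] {g : M} (hg : g ∈ s) (u : M) (q : ℕ) :
    (addCayley s).edist u (u + q • g) ≤ q := by
  induction q with
  | zero => simp
  | succ q ih =>
    rw [succ_nsmul, ← add_assoc, Nat.cast_succ]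
    exact SimpleGraph.edist_triangle.trans (add_le_add ih (edist_addCayley_add_le_one hg _))

lemma edist_addCayley_add_sum_nsmul_le [AddCommMonoid M] {ι : Type*} {t : Finset ι} {g : ι → M}
    (hg : ∀ i ∈ t, g i ∈ s) (c : ι → ℕ) (u : M) :
    (addCayley s).edist u (u + ∑ i ∈ t, c i • g i) ≤ (∑ i ∈ t, c i : ℕ) := by
  classical
  induction t using Finset.induction_on with
  | empty => simp
  | insert j t hj ih =>
    rw [Finset.sum_insert hj, Finset.sum_insert hj, add_comm (c j • g j), add_comm (c j),
      ← add_assoc, Nat.cast_add]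
    exact SimpleGraph.edist_triangle.trans (add_le_add
      (ih fun i hi => hg i (Finset.mem_insert_of_mem hi))
      (edist_addCayley_add_nsmul_le (hg j (Finset.mem_insert_self j t)) _ _))

end Cayley

lemma exists_eq_sum_mul_of_lt {s : ℕ → ℤ} (hs_zero : s 0 = 1) (hs_pos : ∀ k, 0 < s k) {k : ℕ}
    {x : ℤ} (hx_nonneg : 0 ≤ x) (hx_lt : x < s k) :
    ∃ c : ℕ → ℕ, x = ∑ i ∈ Finset.range k, c i * s i ∧ ∀ i < k, c i * s i < s (i + 1) := by
  induction k generalizing x with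
  | zero =>
    obtain rfl : x = 0 := by lia
    exact ⟨0, by simp⟩
  | succ k ih =>
    obtain ⟨c, hsum, hc⟩ := ih (Int.emod_nonneg x (hs_pos k).ne') (Int.emod_lt_of_pos x (hs_pos k))
    obtain ⟨q, hq⟩ := Int.eq_ofNat_of_zero_le (Int.ediv_nonneg hx_nonneg (hs_pos k).le)
    have hlt : ∀ i < k, Function.update c k q i = c i := fun i hi =>
      Function.update_of_ne hi.ne _ _
    have hsum_lt : ∑ i ∈ Finset.range k, Function.update c k q i * s i = x % s k :=
      hsum ▸ Finset.sum_congr rfl fun i hi => by rw [hlt i (Finset.mem_range.mp hi)]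
    refine ⟨Function.update c k q, ?_, fun i hi => ?_⟩
    · rw [Finset.sum_range_succ, hsum_lt, Function.update_self, ← hq, Int.emod_add_ediv_mul]
    · obtain hik | rfl := Nat.lt_succ_iff_lt_or_eq.mp hi
      · rw [hlt i hik]
        exact hc i hik
      · rw [Function.update_self, ← hq]
        exact (Int.ediv_mul_le x (hs_pos i).ne').trans_lt hx_lt

section Round

variable {K : Type*} [Field K] [LinearOrder K] [IsStrictOrderedRing K] [FloorRing K]

lemma one_le_round {x : K} (hx : 1 ≤ x) : 1 ≤ round x := by
  rw [round_eq, Int.le_floor, Int.cast_one]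
  linarith

lemma round_mul_le_add_one_mul_round {a x : K} (ha : 1 ≤ a) (hax : a ≤ x) :
    (round (a * x) : K) ≤ (a + 1) * round x := by
  have hx_lt : x < round x + 1 / 2 := by linarith [sub_half_lt_round x]
  -- Rounding errors are affordable if `round x ≥ 2`; if `round x = 1`, then `a ≤ x < 2` and
  -- `a * x` is so small that integrality of `round (a * x)` absorbs them.
  obtain hone | htwo := (one_le_round (ha.trans hax)).eq_or_lt'
  · have hax_lt : a * x < 9 / 4 := by
      rw [hone, Int.cast_one] at hx_lt
      nlinarith
    have hround_lt : (round (a * x) : K) < 3 := by linarith [round_le_add_half (a * x)]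
    have hround_le : (round (a * x) : K) ≤ 2 := by
      exact_mod_cast Int.lt_add_one_iff.mp (by exact_mod_cast hround_lt)
    rw [hone, Int.cast_one]
    linarith
  · have htwo' : (2 : K) ≤ round x := by exact_mod_cast htwo
    calc (round (a * x) : K) ≤ a * x + 1 / 2 := round_le_add_half _
      _ ≤ a * (round x + 1 / 2) + 1 / 2 := by gcongr
      _ ≤ (a + 1) * round x := by linarith

lemma round_pow_succ_le_add_one_mul_round {a : K} (ha : 1 ≤ a) (k : ℕ) :
    (round (a ^ (k + 1)) : K) ≤ (a + 1) * round (a ^ k) := by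
  obtain rfl | hk := eq_or_ne k 0
  · simp only [zero_add, pow_one, pow_zero, round_one, Int.cast_one, mul_one]
    linarith [round_le_add_half a]
  · rw [pow_succ']
    exact round_mul_le_add_one_mul_round ha (le_self_pow₀ ha hk)

lemma exists_eq_sum_mul_round_pow {a : K} (ha : 1 ≤ a) {k : ℕ} {x : ℤ} (hx_nonneg : 0 ≤ x)
    (hx_lt : x < round (a ^ k)) :
    ∃ c : ℕ → ℕ, x = ∑ i ∈ Finset.range k, c i * round (a ^ i) ∧
      ((∑ i ∈ Finset.range k, c i : ℕ) : K) ≤ k * (a + 1) := by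
  have hpos (i : ℕ) : 0 < round (a ^ i) := one_le_round (one_le_pow₀ ha)
  obtain ⟨c, hsum, hc⟩ :=
    exists_eq_sum_mul_of_lt (s := fun i => round (a ^ i)) (by simp) hpos hx_nonneg hx_lt
  have hc_le (i : ℕ) (hi : i < k) : (c i : K) ≤ a + 1 := by
    have hlt : (c i : K) * round (a ^ i) < round (a ^ (i + 1)) := by exact_mod_cast hc i hi
    exact le_of_mul_le_mul_right (hlt.le.trans (round_pow_succ_le_add_one_mul_round ha i))
      (by exact_mod_cast hpos i)
  refine ⟨c, hsum, ?_⟩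
  rw [Nat.cast_sum, ← nsmul_eq_mul]
  simpa only [Finset.card_range] using
    Finset.sum_le_card_nsmul _ _ _ fun i hi => hc_le i (Finset.mem_range.mp hi)

end Round

lemma genStep_sub_eq_round_pow (m n : ℕ) {k : ℕ} (hk : k ≤ m) :
    genStep m n (m - k) = round (((n : ℝ) ^ (1 / (m : ℝ))) ^ k) := by
  rw [genStep, Nat.sub_sub_self hk, ← Real.rpow_mul_natCast n.cast_nonneg, one_div_mul_eq_div]

/-- One half of the connection set of `Λ_m(n)`, without the negatives, which `SimpleGraph.addCayley`
adds by itself. -/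
def genSet (m n : ℕ) : Set (ZMod n) :=
  {g | ∃ i, 1 ≤ i ∧ i ≤ m ∧ g = (genStep m n i : ℤ)}

lemma lamM_eq_addCayley (m n : ℕ) : lamM m n = SimpleGraph.addCayley (genSet m n) := by
  ext u v
  simp only [lamM, genSet, SimpleGraph.fromRel_adj, SimpleGraph.addCayley_adj,
    Set.mem_ofPred_eq, neg_add_eq_iff_eq_add]

lemma round_pow_mem_genSet {m k : ℕ} (n : ℕ) (hk : k < m) :
    (round (((n : ℝ) ^ (1 / (m : ℝ))) ^ k) : ZMod n) ∈ genSet m n :=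
  ⟨m - k, Nat.sub_pos_of_lt hk, m.sub_le k, by rw [genStep_sub_eq_round_pow m n hk.le]⟩

/-- Since `ediam` is `⊤` for a disconnected graph, where `diam` is `0`, this bound includes the
connectedness of the graph. -/
theorem stmt_1_general {m n : ℕ} (hm : m ≠ 0) (hn : n ≠ 0) :
    (lamM m n).ediam ≤ ⌊(m : ℝ) * (n : ℝ) ^ (1 / (m : ℝ)) + m⌋₊ := by
  have : NeZero n := ⟨hn⟩
  set a := (n : ℝ) ^ (1 / (m : ℝ)) with ha_def
  have ha : 1 ≤ a := Real.one_le_rpow (by exact_mod_cast Nat.one_le_iff_ne_zero.mpr hn)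
    (by positivity)
  have hround : round (a ^ m) = n := by
    rw [ha_def, one_div, Real.rpow_inv_natCast_pow n.cast_nonneg hm, round_natCast]
  rw [lamM_eq_addCayley]
  refine SimpleGraph.ediam_le_of_edist_le fun u v => ?_
  obtain ⟨c, hsum, hc⟩ := exists_eq_sum_mul_round_pow ha (Int.natCast_nonneg (v - u).val)
    (by rw [hround]; exact_mod_cast (v - u).val_lt)
  have hv : v = u + ∑ i ∈ Finset.range m, c i • (round (a ^ i) : ZMod n) := by
    have hsum_zmod := congrArg (Int.cast : ℤ → ZMod n) hsum
    push_cast [ZMod.natCast_zmod_val] at hsum_zmod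
    simp only [nsmul_eq_mul, ← hsum_zmod, add_sub_cancel]
  rw [hv]
  calc (SimpleGraph.addCayley (genSet m n)).edist u _
      ≤ (∑ i ∈ Finset.range m, c i : ℕ) := edist_addCayley_add_sum_nsmul_le
        (fun i hi => round_pow_mem_genSet n (Finset.mem_range.mp hi)) c u
    _ ≤ ⌊m * a + m⌋₊ := by exact_mod_cast Nat.le_floor (hc.trans_eq (by ring))

/-- For every `m ≥ 3` and every sufficiently large `n`, the diameter of `Λ_m(n)` is
at most `m·n^(1/m) + m`. -/
theorem stmt_1 : ∀ m : ℕ, 3 ≤ m → ∃ N : ℕ, ∀ n : ℕ, N ≤ n →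
    ((lamM m n).diam : ℝ) ≤ (m : ℝ) * (n : ℝ) ^ ((1 : ℝ) / (m : ℝ)) + (m : ℝ) :=
  fun m hm => ⟨1, fun n hn => (Nat.le_floor_iff (by positivity)).mp <|
    ENat.toNat_le_of_le_natCast (stmt_1_general (m := m) (n := n) (by lia) (by lia))⟩
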